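/- Rounding weights preserves near-optimality: let M > n² be the maximum edge weight of a DPVC instance with optimal value OPT ≥ M, and form a new instance with weights w'_{uv} = ⌊w_{uv}·n²/M⌋. Then the new optimal value OPT' satisfies OPT' ≤ n²·OPT/M, and any feasible solution SOL' of the new instance with SOL' ≤ ρ·OPT' (ρ ≥ 1) can be converted, by multiplying each vertex value by M/n² and adding M/n², into a feasible solution of the original instance with total power at most (ρ + 1/n)·OPT. -/

import Mathlib

/-- Rounding weights preserves near-optimality: let `M > n²` bound the edge weights
of a DPVC instance with optimal value `OPT ≥ M`, and form the new instance with
weights `w' a b = ⌊w a b · n² / M⌋` (natural division is the floor). Then the new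
optimal value satisfies `OPT' ≤ n²·OPT/M`, and any feasible solution `SOL'` of the
new instance with `∑ SOL' ≤ ρ·OPT'` (`ρ ≥ 1`) converts — by multiplying each vertex
value by `M/n²` and adding `M/n²` — into a feasible solution of the original instance
of total power at most `(ρ + 1/n)·OPT`. -/
theorem stmt_11 {V : Type*} [Fintype V] (E : V → V → Prop)
    (w : V → V → ℕ)
    (hEsymm : ∀ a b, E a b → E b a)
    (hwpos : ∀ a b, E a b → 0 < w a b)
    (n : ℕ) (hn : n = Fintype.card V) (hn1 : 1 ≤ n)
    (M : ℕ) (hM : n ^ 2 < M) (hwM : ∀ a b, E a b → w a b ≤ M)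
    (OPT : ℝ) (popt : V → ℝ)
    (hpopt0 : ∀ x, 0 ≤ popt x)
    (hpoptfeas : ∀ a b, E a b → (w a b : ℝ) ≤ popt a ∨ (w b a : ℝ) ≤ popt b)
    (hpoptsum : ∑ x, popt x = OPT)
    (hoptmin : ∀ q : V → ℝ, (∀ x, 0 ≤ q x) →
      (∀ a b, E a b → (w a b : ℝ) ≤ q a ∨ (w b a : ℝ) ≤ q b) → OPT ≤ ∑ x, q x)
    (hOPTM : (M : ℝ) ≤ OPT)
    (OPT' : ℝ) (popt' : V → ℝ)
    (hpopt'0 : ∀ x, 0 ≤ popt' x)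
    (hpopt'feas : ∀ a b, E a b →
      ((w a b * n ^ 2 / M : ℕ) : ℝ) ≤ popt' a ∨ ((w b a * n ^ 2 / M : ℕ) : ℝ) ≤ popt' b)
    (hpopt'sum : ∑ x, popt' x = OPT')
    (hopt'min : ∀ q : V → ℝ, (∀ x, 0 ≤ q x) →
      (∀ a b, E a b →
        ((w a b * n ^ 2 / M : ℕ) : ℝ) ≤ q a ∨ ((w b a * n ^ 2 / M : ℕ) : ℝ) ≤ q b) →
      OPT' ≤ ∑ x, q x)
    (ρ : ℝ) (hρ : 1 ≤ ρ)
    (SOL' : V → ℝ)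
    (hSOL'0 : ∀ x, 0 ≤ SOL' x)
    (hSOL'feas : ∀ a b, E a b →
      ((w a b * n ^ 2 / M : ℕ) : ℝ) ≤ SOL' a ∨ ((w b a * n ^ 2 / M : ℕ) : ℝ) ≤ SOL' b)
    (hSOL' : ∑ x, SOL' x ≤ ρ * OPT') :
    OPT' ≤ (n : ℝ) ^ 2 * OPT / M ∧
    (∀ a b, E a b →
      (w a b : ℝ) ≤ SOL' a * ((M : ℝ) / (n : ℝ) ^ 2) + (M : ℝ) / (n : ℝ) ^ 2 ∨
      (w b a : ℝ) ≤ SOL' b * ((M : ℝ) / (n : ℝ) ^ 2) + (M : ℝ) / (n : ℝ) ^ 2) ∧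
    ∑ x, (SOL' x * ((M : ℝ) / (n : ℝ) ^ 2) + (M : ℝ) / (n : ℝ) ^ 2) ≤
      (ρ + 1 / (n : ℝ)) * OPT := by
  have hMp : (0 : ℝ) < M := by
    have : 0 < M := by omega
    exact_mod_cast this
  have hnp : (0 : ℝ) < n := by exact_mod_cast hn1
  have hc : (0 : ℝ) < (M : ℝ) / (n : ℝ) ^ 2 := by positivity
  have hlow : ∀ k : ℕ, ∀ p : ℝ, (k : ℝ) ≤ p →
      ((k * n ^ 2 / M : ℕ) : ℝ) ≤ p * ((n : ℝ) ^ 2 / M) := by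
    intro k p hk
    have h1 : ((k * n ^ 2 / M : ℕ) : ℝ) ≤ ((k * n ^ 2 : ℕ) : ℝ) / (M : ℝ) := Nat.cast_div_le
    push_cast at h1 ⊢
    calc _ ≤ (k : ℝ) * (n : ℝ) ^ 2 / M := h1
      _ = (k : ℝ) * ((n : ℝ) ^ 2 / M) := by ring
      _ ≤ _ := by gcongr
  have hup : ∀ k : ℕ, ∀ p : ℝ, ((k * n ^ 2 / M : ℕ) : ℝ) ≤ p →
      (k : ℝ) ≤ p * ((M : ℝ) / (n : ℝ) ^ 2) + (M : ℝ) / (n : ℝ) ^ 2 := by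
    intro k p hk
    have h1 : k * n ^ 2 < M * (k * n ^ 2 / M + 1) :=
      Nat.lt_mul_div_succ _ (by omega)
    have h2 : (k : ℝ) * (n : ℝ) ^ 2 < M * (((k * n ^ 2 / M : ℕ) : ℝ) + 1) := by
      exact_mod_cast h1
    have h3 : (M : ℝ) * (((k * n ^ 2 / M : ℕ) : ℝ) + 1) ≤ M * (p + 1) := by gcongr
    have h4 : p * ((M : ℝ) / (n : ℝ) ^ 2) + (M : ℝ) / (n : ℝ) ^ 2
        = M * (p + 1) / (n : ℝ) ^ 2 := by ring
    rw [h4, le_div_iff₀ (by positivity)]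
    linarith
  have hA : OPT' ≤ (n : ℝ) ^ 2 * OPT / M := by
    have h := hopt'min (fun x => popt x * ((n : ℝ) ^ 2 / M))
      (fun x => mul_nonneg (hpopt0 x) (by positivity))
      (fun a b hab => (hpoptfeas a b hab).imp (hlow _ _) (hlow _ _))
    rw [← Finset.sum_mul, hpoptsum] at h
    calc OPT' ≤ _ := h
      _ = _ := by ring
  refine ⟨hA, fun a b hab => (hSOL'feas a b hab).imp (hup _ _) (hup _ _), ?_⟩
  rw [Finset.sum_add_distrib, ← Finset.sum_mul, Finset.sum_const, Finset.card_univ, ← hn,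
    nsmul_eq_mul]
  have h1 : (∑ x, SOL' x) * ((M : ℝ) / (n : ℝ) ^ 2) ≤ ρ * OPT := by
    calc _ ≤ (ρ * ((n : ℝ) ^ 2 * OPT / M)) * ((M : ℝ) / (n : ℝ) ^ 2) := by
          apply mul_le_mul_of_nonneg_right _ hc.le
          exact hSOL'.trans (mul_le_mul_of_nonneg_left hA (by linarith))
      _ = ρ * OPT := by field_simp
  have h2 : (n : ℝ) * ((M : ℝ) / (n : ℝ) ^ 2) ≤ 1 / (n : ℝ) * OPT := by
    calc _ = 1 / (n : ℝ) * M := by field_simp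
      _ ≤ _ := by gcongr
  linarith
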